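/- Let n ≥ 2 and 1 ≤ α < n. (i) For 1 < p < n/α and 1/q = 1/p − α/n there is C such that ‖𝒮_{α−1} f‖_{L^q(ℝ^n)} ≤ C ‖∇f‖_{L^p(ℝ^n)} for all f ∈ C_c^∞(ℝ^n). (ii) At the endpoint p = 1, there is C such that ‖𝒮_{α−1} f‖_{L^{n/(n−α),∞}(ℝ^n)} ≤ C ‖∇f‖_{L^1(ℝ^n)} for all f ∈ C_c^∞(ℝ^n). -/

import Mathlib

open MeasureTheory Metric Set Filter
open scoped ENNReal NNReal Topology

noncomputable section

abbrev Rn (n : ℕ) := EuclideanSpace ℝ (Fin n)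

/-- An axis-parallel half-open cube in `ℝⁿ`. -/
structure Cube (n : ℕ) where
  corner : Fin n → ℝ
  side : ℝ
  side_pos : 0 < side

/-- The set of points of a cube. -/
def Cube.carrier {n : ℕ} (Q : Cube n) : Set (Rn n) :=
  {x | ∀ i, Q.corner i ≤ x i ∧ x i < Q.corner i + Q.side}

/-- Surface measure on the unit sphere `𝕊^{n-1} ⊆ ℝⁿ`. -/
def sphereMeasure (n : ℕ) : Measure (Rn n) :=
  (MeasureTheory.Measure.hausdorffMeasure ((n : ℝ) - 1)).restrict (sphere (0 : Rn n) 1)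

/-- `f ∈ C_c^∞(ℝⁿ)`. -/
def IsCcSmooth {n : ℕ} (f : Rn n → ℝ) : Prop :=
  ContDiff ℝ (⊤ : ℕ∞) f ∧ HasCompactSupport f

/-- Truncated rough fractional singular integral. -/
def roughOpTrunc (n : ℕ) (α : ℝ) (Ω f : Rn n → ℝ) (x : Rn n) (ε : ℝ) : ℝ :=
  ∫ y in {y : Rn n | ε < ‖y‖}, (Ω (‖y‖⁻¹ • y) / ‖y‖ ^ ((n : ℝ) + 1 - α)) * f (x - y)

/-- The rough fractional singular integral `T_{Ω,α} f`, as a principal value. -/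
def roughOp (n : ℕ) (α : ℝ) (Ω f : Rn n → ℝ) (x : Rn n) : ℝ :=
  limUnder (𝓝[>] (0 : ℝ)) (roughOpTrunc n α Ω f x)

/-- Riesz potential (modulo its normalizing constant) of a nonnegative function. -/
def rieszPot (n : ℕ) (α : ℝ) (g : Rn n → ℝ) (x : Rn n) : ℝ≥0∞ :=
  ∫⁻ y, ENNReal.ofReal (g y) / ENNReal.ofReal (‖x - y‖ ^ ((n : ℝ) - α))

/-- `|∇f|`. -/
def gradNorm {n : ℕ} (f : Rn n → ℝ) (y : Rn n) : ℝ := ‖gradient f y‖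

/-- Weak Lorentz norm `‖Ω‖_{L^{r,∞}(𝕊^{n-1})}`. -/
def weakLorentzSphere (n : ℕ) (r : ℝ) (Ω : Rn n → ℝ) : ℝ≥0∞ :=
  ⨆ (t : ℝ) (_ : 0 < t), ENNReal.ofReal t * sphereMeasure n {y | t < |Ω y|} ^ (1 / r)

/-- Lorentz norm `‖Ω‖_{L^{r,q}(𝕊^{n-1})}`. -/
def lorentzSphere (n : ℕ) (r q : ℝ) (Ω : Rn n → ℝ) : ℝ≥0∞ :=
  (ENNReal.ofReal r *
      ∫⁻ t in Ioi (0 : ℝ),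
        ENNReal.ofReal t ^ q * sphereMeasure n {y | t < |Ω y|} ^ (q / r) / ENNReal.ofReal t) ^ (1 / q)

/-- The Young function `Φ(t) = t log(1+t)^{1/n'}`, `1/n' = (n-1)/n`. -/
def orliczYoung (n : ℕ) (t : ℝ) : ℝ := t * Real.log (1 + t) ^ (((n : ℝ) - 1) / n)

/-- Admissible Orlicz levels for the `L(log L)^{1/n'}` norm w.r.t. normalized surface measure. -/
def orliczSet (n : ℕ) (Ω : Rn n → ℝ) : Set ℝ :=
  {lam | 0 < lam ∧ ⨍ y, orliczYoung n (|Ω y| / lam) ∂sphereMeasure n ≤ 1}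

/-- Orlicz norm `‖Ω‖_{L(log L)^{1/n'}(𝕊^{n-1})}`. -/
def orliczSphereNorm (n : ℕ) (Ω : Rn n → ℝ) : ℝ := sInf (orliczSet n Ω)

/-- A sparse family of cubes. -/
def IsSparse {n : ℕ} (𝒮 : Set (Cube n)) : Prop :=
  ∃ E : Cube n → Set (Rn n),
    (∀ Q ∈ 𝒮, E Q ⊆ Q.carrier ∧ volume Q.carrier ≤ 2 * volume (E Q)) ∧
    𝒮.Pairwise fun Q P => Disjoint (E Q) (E P)

/-- A dyadic grid of cubes. -/
def IsDyadicGrid {n : ℕ} (𝒟 : Set (Cube n)) : Prop :=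
  (∀ Q ∈ 𝒟, ∃ k : ℤ, Q.side = (2 : ℝ) ^ k) ∧
  (∀ (k : ℤ) (x : Rn n), ∃! Q : Cube n, Q ∈ 𝒟 ∧ Q.side = (2 : ℝ) ^ k ∧ x ∈ Q.carrier) ∧
  (∀ Q ∈ 𝒟, ∀ P ∈ 𝒟, Disjoint Q.carrier P.carrier ∨ Q.carrier ⊆ P.carrier ∨ P.carrier ⊆ Q.carrier)

/-- The shifted dyadic grid `𝒟_t = {2^k([0,1)^n + m + (-1)^k t)}`. -/
def shiftedGrid (n : ℕ) (t : Fin n → ℝ) : Set (Cube n) :=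
  {Q | ∃ (k : ℤ) (m : Fin n → ℤ),
      Q.side = (2 : ℝ) ^ k ∧ Q.corner = fun i => (2 : ℝ) ^ k * ((m i : ℝ) + (-1 : ℝ) ^ k * t i)}

/-- `(⨍_Q |g|^s)^{1/s}` as an extended nonnegative real. -/
def avgLs (n : ℕ) (s : ℝ) (Q : Cube n) (g : Rn n → ℝ) : ℝ≥0∞ :=
  ((volume Q.carrier)⁻¹ * ∫⁻ y in Q.carrier, ENNReal.ofReal |g y| ^ s) ^ (1 / s)

/-- The `L^s` sparse (or dyadic) fractional operator `I^𝒮_{α,L^s}`. -/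
def sparseOpLs (n : ℕ) (α s : ℝ) (𝒮 : Set (Cube n)) (g : Rn n → ℝ) (x : Rn n) : ℝ≥0∞ :=
  ∑' Q : 𝒮, Set.indicator (Q : Cube n).carrier
      (fun _ => ENNReal.ofReal ((Q : Cube n).side ^ α) * avgLs n s (Q : Cube n) g) x

/-- The `L^s` fractional maximal operator `M_{α,L^s}`. -/
def maxOpLs (n : ℕ) (α s : ℝ) (g : Rn n → ℝ) (x : Rn n) : ℝ≥0∞ :=
  ⨆ (Q : Cube n) (_ : x ∈ Q.carrier), ENNReal.ofReal (Q.side ^ α) * avgLs n s Q g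

/-- The measure `w dx` associated with a weight `w`. -/
def wMeasure (n : ℕ) (w : Rn n → ℝ) : Measure (Rn n) :=
  volume.withDensity fun x => ENNReal.ofReal (w x)

/-- Muckenhoupt `A_∞` (via the standard fair-proportion characterization). -/
def IsAinfty {n : ℕ} (w : Rn n → ℝ) : Prop :=
  ∃ C > (0 : ℝ), ∃ δ > (0 : ℝ), ∀ Q : Cube n, ∀ S ⊆ Q.carrier, MeasurableSet S →
    wMeasure n w S ≤
      ENNReal.ofReal C * (volume S / volume Q.carrier) ^ δ * wMeasure n w Q.carrier

/-- `‖g‖_{L^p(w)}` for an `ℝ≥0∞`-valued `g`. -/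
def lpNormW (n : ℕ) (p : ℝ) (w : Rn n → ℝ) (g : Rn n → ℝ≥0∞) : ℝ≥0∞ :=
  (∫⁻ x, g x ^ p ∂wMeasure n w) ^ (1 / p)

/-- `‖g‖_{L^{p,∞}(w)}` for an `ℝ≥0∞`-valued `g`. -/
def weakNormW (n : ℕ) (p : ℝ) (w : Rn n → ℝ) (g : Rn n → ℝ≥0∞) : ℝ≥0∞ :=
  ⨆ (lam : ℝ) (_ : 0 < lam),
    ENNReal.ofReal lam * wMeasure n w {x | ENNReal.ofReal lam < g x} ^ (1 / p)

/-- Unweighted `L^p` "norm" of an `ℝ≥0∞`-valued function. -/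
def lqNorm (n : ℕ) (p : ℝ) (g : Rn n → ℝ≥0∞) : ℝ≥0∞ :=
  (∫⁻ x, g x ^ p) ^ (1 / p)

/-- Unweighted weak `L^p` norm of an `ℝ≥0∞`-valued function. -/
def weakNorm (n : ℕ) (p : ℝ) (g : Rn n → ℝ≥0∞) : ℝ≥0∞ :=
  ⨆ (lam : ℝ) (_ : 0 < lam),
    ENNReal.ofReal lam * volume {x | ENNReal.ofReal lam < g x} ^ (1 / p)

/-- Maximal function of a measure over cubes. -/
def measMax (n : ℕ) (μ : Measure (Rn n)) (x : Rn n) : ℝ≥0∞ :=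
  ⨆ (Q : Cube n) (_ : x ∈ Q.carrier), μ Q.carrier / volume Q.carrier

/-- The rough fractional maximal operator `M_{Ω,α}`. -/
def roughMax (n : ℕ) (α : ℝ) (Ω f : Rn n → ℝ) (x : Rn n) : ℝ≥0∞ :=
  ⨆ (t : ℝ) (_ : 0 < t),
    ENNReal.ofReal (t ^ (α - 1)) * ((volume (ball (0 : Rn n) t))⁻¹ *
      ∫⁻ y in ball (0 : Rn n) t, ENNReal.ofReal |Ω (‖y‖⁻¹ • y) * f (x - y)|)

/-- Average of `f` over the ball `B(x,t)`. -/
def ballAvg {n : ℕ} (f : Rn n → ℝ) (x : Rn n) (t : ℝ) : ℝ :=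
  ⨍ y in ball x t, f y

/-- The sharp rough fractional maximal operator `M^#_{Ω,α}`. -/
def roughMaxSharp (n : ℕ) (α : ℝ) (Ω f : Rn n → ℝ) (x : Rn n) : ℝ≥0∞ :=
  ⨆ (t : ℝ) (_ : 0 < t),
    ENNReal.ofReal (t ^ (α - 1)) * ((volume (ball (0 : Rn n) t))⁻¹ *
      ∫⁻ y in ball (0 : Rn n) t,
        ENNReal.ofReal (|Ω (‖y‖⁻¹ • y)| * |f (x - y) - ballAvg f x t|))

/-- The natural rough maximal operator `M^♮_Ω` (with `α = 1`). -/
def roughMaxNatural (n : ℕ) (Ω f : Rn n → ℝ) (x : Rn n) : ℝ≥0∞ :=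
  ⨆ (t : ℝ) (_ : 0 < t),
    ENNReal.ofReal |⨍ y in ball (0 : Rn n) t, Ω (‖y‖⁻¹ • y) * f (x - y)|

/-- The fractional spherical maximal operator `𝒮_β`. -/
def sphMax (n : ℕ) (β : ℝ) (f : Rn n → ℝ) (x : Rn n) : ℝ≥0∞ :=
  ⨆ (r : ℝ) (_ : 0 < r),
    ENNReal.ofReal (r ^ β) *
      ((MeasureTheory.Measure.hausdorffMeasure ((n : ℝ) - 1) (sphere x r))⁻¹ *
        ∫⁻ y in sphere x r, ENNReal.ofReal |f y|
          ∂(MeasureTheory.Measure.hausdorffMeasure ((n : ℝ) - 1)))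


/-- The measure `w^q dx`. -/
def wqMeasure (n : ℕ) (q : ℝ) (w : Rn n → ℝ) : Measure (Rn n) :=
  volume.withDensity fun x => ENNReal.ofReal (w x) ^ q

/-- Weak norm `‖g‖_{L^{q,∞}(w^q)}` for `ℝ≥0∞`-valued `g`. -/
def weakNormWq (n : ℕ) (q : ℝ) (w : Rn n → ℝ) (g : Rn n → ℝ≥0∞) : ℝ≥0∞ :=
  ⨆ (lam : ℝ) (_ : 0 < lam),
    ENNReal.ofReal lam * wqMeasure n q w {x | ENNReal.ofReal lam < g x} ^ (1 / q)

/-!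
Integrating `∇f` from `∂B(x, r)` to infinity along the rays issuing from `x` bounds the spherical
average of `|f|` by an integral of `|∇f|` over the complement of `B(x, r)` in polar coordinates;
since `α ≥ 1`, the factor `r ^ (α - 1)` is at most `s ^ (α - 1)` at every radius `s > r`, so
`𝒮_{α-1} f` is pointwise dominated by the Riesz potential `I_α |∇f|`. The average is taken with
respect to Hausdorff measure and the polar coordinates with respect to the cone measure of the
sphere; both are invariant under rotations, hence uniformly distributed, and two such measures are
proportional.

Both parts are then the Hardy–Littlewood–Sobolev theorem. When `‖g‖_p ≤ 1`, Hölder's inequality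
bounds the part of `I_α g` coming from outside a ball, and the radius `R` can be chosen so that
this part is a fraction of `t`. Truncating `g` at a multiple of `t ^ (q / p)` disposes of another
fraction, and Chebyshev's inequality for the remaining part gives a single estimate for
`|{I_α g > t}|` by an integral of `g` over its own superlevel set. For `p = 1` it is the weak-type
bound, and for `p > 1` it integrates over `t` to the strong-type bound.
-/

section LayerCake

theorem lintegral_Ioo_zero_rpow {e Λ : ℝ} (he : 0 < e) (hΛ : 0 ≤ Λ) :
    ∫⁻ t in Ioo 0 Λ, ENNReal.ofReal (t ^ (e - 1)) = ENNReal.ofReal (Λ ^ e / e) := by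
  rw [setLIntegral_congr Ioo_ae_eq_Ioc, ← ofReal_integral_eq_lintegral_ofReal]
  · rw [← intervalIntegral.integral_of_le hΛ, integral_rpow (Or.inl (by linarith)),
      sub_add_cancel, Real.zero_rpow he.ne', sub_zero]
  · exact (intervalIntegral.intervalIntegrable_rpow' (by linarith)).1
  · filter_upwards [ae_restrict_mem measurableSet_Ioc] with t ht
    exact Real.rpow_nonneg ht.1.le _

theorem lintegral_Ioi_rpow_neg {e R : ℝ} (he : 0 < e) (hR : 0 < R) :
    ∫⁻ s in Ioi R, ENNReal.ofReal (s ^ (-e - 1)) = ENNReal.ofReal (R ^ (-e) / e) := by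
  rw [← ofReal_integral_eq_lintegral_ofReal]
  · rw [integral_Ioi_rpow_of_lt (by linarith) hR, sub_add_cancel, neg_div_neg_eq]
  · exact integrableOn_Ioi_rpow_of_lt (by linarith) hR
  · filter_upwards [ae_restrict_mem measurableSet_Ioi] with s hs
    exact Real.rpow_nonneg (hR.trans hs).le _

theorem lintegral_Ioi_zero_rpow_eq_top (s : ℝ) :
    ∫⁻ t in Ioi (0 : ℝ), ENNReal.ofReal (t ^ s) = ∞ := by
  by_contra h
  refine not_integrableOn_Ioi_rpow s ((lintegral_ofReal_ne_top_iff_integrable ?_ ?_).1 h)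
  · exact (measurable_id.pow_const s).aestronglyMeasurable
  · filter_upwards [ae_restrict_mem measurableSet_Ioi] with t ht
    exact Real.rpow_nonneg (le_of_lt ht) _

theorem lintegral_Ioi_indicator_rpow {e : ℝ} (he : 0 < e) (a : ℝ≥0∞) :
    ∫⁻ t in Ioi (0 : ℝ), {t | ENNReal.ofReal t < a}.indicator
      (fun t ↦ ENNReal.ofReal (t ^ (e - 1))) t = a ^ e / ENNReal.ofReal e := by
  induction a with
  | top => simp [ENNReal.top_rpow_of_pos he, ENNReal.top_div, lintegral_Ioi_zero_rpow_eq_top]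
  | coe a =>
    have hset : {t : ℝ | ENNReal.ofReal t < a} ∩ Ioi 0 = Ioo 0 (a : ℝ) := by
      ext t
      simp only [mem_inter_iff, mem_ofPred_eq, mem_Ioi, mem_Ioo, and_comm (b := 0 < t),
        and_congr_right_iff]
      intro ht
      rw [← ENNReal.ofReal_coe_nnreal, ENNReal.ofReal_lt_ofReal_iff_of_nonneg ht.le]
    rw [setLIntegral_indicator (measurableSet_lt ENNReal.measurable_ofReal measurable_const), hset,
      lintegral_Ioo_zero_rpow he a.coe_nonneg, ENNReal.ofReal_div_of_pos he,
      ← ENNReal.ofReal_rpow_of_nonneg a.coe_nonneg he.le, ENNReal.ofReal_coe_nnreal]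

variable {X : Type*} [MeasurableSpace X] {μ : Measure X}

theorem lintegral_rpow_eq_lintegral_measure_lt [SFinite μ] {e : ℝ} (he : 0 < e) {F : X → ℝ≥0∞}
    (hF : Measurable F) :
    ∫⁻ x, F x ^ e ∂μ = ENNReal.ofReal e *
      ∫⁻ t in Ioi (0 : ℝ), ENNReal.ofReal (t ^ (e - 1)) * μ {x | ENNReal.ofReal t < F x} := by
  have he' : ENNReal.ofReal e ≠ 0 := by simpa using he
  let k : X → ℝ → ℝ≥0∞ := fun x ↦
    {t | ENNReal.ofReal t < F x}.indicator fun t ↦ ENNReal.ofReal (t ^ (e - 1))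
  have hk : Measurable (Function.uncurry k) :=
    Measurable.indicator (s := {z : X × ℝ | ENNReal.ofReal z.2 < F z.1}) (by fun_prop)
      (measurableSet_lt (by fun_prop) (by fun_prop))
  calc ∫⁻ x, F x ^ e ∂μ
      = ∫⁻ x, ENNReal.ofReal e * (∫⁻ t in Ioi (0 : ℝ), k x t) ∂μ := by
        simp only [k, lintegral_Ioi_indicator_rpow he,
          ENNReal.mul_div_cancel he' ENNReal.ofReal_ne_top]
    _ = ENNReal.ofReal e * ∫⁻ t in Ioi (0 : ℝ), ∫⁻ x, k x t ∂μ := by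
        rw [lintegral_const_mul' _ _ ENNReal.ofReal_ne_top,
          lintegral_lintegral_swap hk.aemeasurable]
    _ = _ := by
        congr! with t
        exact lintegral_indicator_const (s := {x | ENNReal.ofReal t < F x})
          (measurableSet_lt measurable_const hF) _

theorem ofReal_mul_rpow_lt_iff {c t s : ℝ} (hc : 0 < c) (ht : 0 < t) (hs : 0 < s) (a : ℝ≥0∞) :
    ENNReal.ofReal (c * t ^ s) < a ↔ ENNReal.ofReal t < (a / ENNReal.ofReal c) ^ s⁻¹ := by
  rw [ENNReal.lt_rpow_inv_iff hs, ENNReal.lt_div_iff_mul_lt (.inl (by simpa using hc))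
    (.inl ENNReal.ofReal_ne_top), mul_comm c, ENNReal.ofReal_mul (by positivity),
    ENNReal.ofReal_rpow_of_pos ht]

theorem mul_div_ofReal_rpow_sub_one {c p : ℝ} (hc : 0 < c) (hp : 1 ≤ p) (a : ℝ≥0∞) :
    a * (a / ENNReal.ofReal c) ^ (p - 1) = ENNReal.ofReal (c ^ (1 - p)) * a ^ p := by
  have hpow : a ^ p = a * a ^ (p - 1) := by
    conv_lhs => rw [← add_sub_cancel 1 p, ENNReal.rpow_add_of_nonneg _ _ zero_le_one (by linarith),
      ENNReal.rpow_one]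
  rw [hpow, ENNReal.div_rpow_of_nonneg _ _ (by linarith), ENNReal.ofReal_rpow_of_pos hc,
    div_eq_mul_inv, ← ENNReal.ofReal_inv_of_pos (by positivity), ← Real.rpow_neg hc.le, neg_sub]
  ring

theorem lintegral_div_rpow_withDensity {c p : ℝ} (hc : 0 < c) (hp : 1 ≤ p) {g : X → ℝ≥0∞}
    (hg : Measurable g) :
    ∫⁻ x, (g x / ENNReal.ofReal c) ^ (p - 1) ∂μ.withDensity g =
      ENNReal.ofReal (c ^ (1 - p)) * ∫⁻ x, g x ^ p ∂μ := by
  rw [lintegral_withDensity_eq_lintegral_mul _ hg (by fun_prop),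
    ← lintegral_const_mul' _ _ ENNReal.ofReal_ne_top]
  simp only [Pi.mul_apply, mul_div_ofReal_rpow_sub_one hc hp]

theorem ofReal_rpow_mul_measure_lt_le_withDensity [SFinite μ] {r q c t : ℝ} (hr : 0 < r)
    (hc : 0 < c) (ht : 0 < t) {F g : X → ℝ≥0∞}
    (h : ENNReal.ofReal (c * t ^ r) * μ {x | ENNReal.ofReal t < F x} ≤
      ∫⁻ x in {x | ENNReal.ofReal (c * t ^ r) < g x}, g x ∂μ) :
    ENNReal.ofReal (t ^ (q - 1)) * μ {x | ENNReal.ofReal t < F x} ≤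
      ENNReal.ofReal c⁻¹ * (ENNReal.ofReal (t ^ (q - r - 1)) *
        (μ.withDensity g) {x | ENNReal.ofReal t < (g x / ENNReal.ofReal c) ^ r⁻¹}) := by
  have hpow : t ^ (q - 1) = c⁻¹ * t ^ (q - r - 1) * (c * t ^ r) := by
    rw [show q - 1 = (q - r - 1) + r by ring, Real.rpow_add ht]
    field_simp
  rw [hpow, ENNReal.ofReal_mul (by positivity), ENNReal.ofReal_mul (by positivity), mul_assoc,
    mul_assoc, withDensity_apply']
  simp only [← ofReal_mul_rpow_lt_iff hc ht hr]
  gcongr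

theorem lintegral_rpow_le_of_mul_measure_lt_le [SFinite μ] {p q c : ℝ} (hp : 1 < p)
    (hq : 0 < q) (hc : 0 < c) {F g : X → ℝ≥0∞} (hF : Measurable F) (hg : Measurable g)
    (h : ∀ t > 0, ENNReal.ofReal (c * t ^ (q / p)) * μ {x | ENNReal.ofReal t < F x} ≤
      ∫⁻ x in {x | ENNReal.ofReal (c * t ^ (q / p)) < g x}, g x ∂μ) :
    ∫⁻ x, F x ^ q ∂μ ≤ ENNReal.ofReal (p / (p - 1) * c ^ (-p)) * ∫⁻ x, g x ^ p ∂μ := by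
  have hp0 : 0 < p := one_pos.trans hp
  obtain ⟨e, he⟩ : ∃ e, e = q - q / p := ⟨_, rfl⟩
  have he0 : 0 < e := he ▸ sub_pos.2 (div_lt_self hq hp)
  let G : X → ℝ≥0∞ := fun x ↦ (g x / ENNReal.ofReal c) ^ (q / p)⁻¹
  have weighted : ∫⁻ x, G x ^ e ∂μ.withDensity g =
      ENNReal.ofReal (c ^ (1 - p)) * ∫⁻ x, g x ^ p ∂μ := by
    have hexp : (q / p)⁻¹ * e = p - 1 := by rw [he]; field_simp
    simp only [G, ← ENNReal.rpow_mul, hexp, lintegral_div_rpow_withDensity hc hp.le hg]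
  calc ∫⁻ x, F x ^ q ∂μ
      = ENNReal.ofReal q *
        ∫⁻ t in Ioi (0 : ℝ), ENNReal.ofReal (t ^ (q - 1)) * μ {x | ENNReal.ofReal t < F x} :=
        lintegral_rpow_eq_lintegral_measure_lt hq hF
    _ ≤ ENNReal.ofReal q * (ENNReal.ofReal c⁻¹ * ∫⁻ t in Ioi (0 : ℝ),
          ENNReal.ofReal (t ^ (e - 1)) * (μ.withDensity g) {x | ENNReal.ofReal t < G x}) := by
        rw [← lintegral_const_mul' (ENNReal.ofReal c⁻¹) _ ENNReal.ofReal_ne_top]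
        gcongr ENNReal.ofReal q * ?_
        refine setLIntegral_mono' measurableSet_Ioi fun t ht ↦ ?_
        rw [he]
        exact ofReal_rpow_mul_measure_lt_le_withDensity (div_pos hq hp0) hc ht (h t ht)
    _ = ENNReal.ofReal (q * c⁻¹ * e⁻¹) * ∫⁻ x, G x ^ e ∂μ.withDensity g := by
        rw [lintegral_rpow_eq_lintegral_measure_lt he0 (by fun_prop), ← mul_assoc, ← mul_assoc,
          ← ENNReal.ofReal_mul hq.le, ← ENNReal.ofReal_mul (by positivity),
          inv_mul_cancel_right₀ he0.ne']
    _ = ENNReal.ofReal (p / (p - 1) * c ^ (-p)) * ∫⁻ x, g x ^ p ∂μ := by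
        rw [weighted, ← mul_assoc, ← ENNReal.ofReal_mul (by positivity), sub_eq_add_neg 1,
          Real.rpow_add hc, Real.rpow_one, he]
        congr 2
        have : p - 1 ≠ 0 := by linarith
        field_simp

end LayerCake

section PolarCoordinates

open Module (finrank)

theorem ofReal_pow_pred_mul_ofReal_rpow {d : ℕ} (hd : 0 < d) {s : ℝ} (hs : 0 < s) (e : ℝ) :
    ENNReal.ofReal (s ^ (d - 1)) * ENNReal.ofReal (s ^ (e - d)) =
      ENNReal.ofReal (s ^ (e - 1)) := by
  rw [← ENNReal.ofReal_mul (by positivity), ← Real.rpow_natCast, ← Real.rpow_add hs,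
    Nat.cast_pred hd]
  congr 2
  ring

variable {E : Type*} [NormedAddCommGroup E] [NormedSpace ℝ E] [FiniteDimensional ℝ E]
  [Nontrivial E] [MeasurableSpace E] [BorelSpace E] (μ : Measure E) [μ.IsAddHaarMeasure]

theorem toSphere_real_univ_pos : 0 < μ.toSphere.real univ :=
  ENNReal.toReal_pos (Measure.measure_univ_ne_zero.2 μ.toSphere_ne_zero) (measure_ne_top _ _)

theorem lintegral_eq_lintegral_toSphere {F : E → ℝ≥0∞} (hF : Measurable F) :
    ∫⁻ y, F y ∂μ = ∫⁻ θ : sphere (0 : E) 1, (∫⁻ s in Ioi (0 : ℝ),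
      ENNReal.ofReal (s ^ (finrank ℝ E - 1)) * F (s • (θ : E))) ∂μ.toSphere := by
  let G : sphere (0 : E) 1 × Ioi (0 : ℝ) → ℝ≥0∞ := fun z ↦ F ((z.2 : ℝ) • (z.1 : E))
  have hG : Measurable G := hF.comp (by fun_prop)
  have hGF (y : ({0}ᶜ : Set E)) : G (homeomorphUnitSphereProd E y) = F y := by
    have : ‖(y : E)‖ ≠ 0 := norm_ne_zero_iff.2 y.2
    simp [G, smul_smul, this]
  calc ∫⁻ y, F y ∂μ
      = ∫⁻ y : ({0}ᶜ : Set E), F y ∂μ.comap Subtype.val := by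
        rw [lintegral_subtype_comap (measurableSet_singleton _).compl F, restrict_compl_singleton]
    _ = ∫⁻ z, G z ∂μ.toSphere.prod (Measure.volumeIoiPow (finrank ℝ E - 1)) := by
        rw [← μ.measurePreserving_homeomorphUnitSphereProd.lintegral_comp hG]
        simp only [hGF]
    _ = _ := by
        rw [lintegral_prod _ hG.aemeasurable]
        refine lintegral_congr fun θ ↦ ?_
        have hGθ : Measurable fun s ↦ G (θ, s) := hG.comp measurable_prodMk_left
        rw [Measure.volumeIoiPow, lintegral_withDensity_eq_lintegral_mul _ (by fun_prop) hGθ]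
        exact lintegral_subtype_comap measurableSet_Ioi
          fun s : ℝ ↦ ENNReal.ofReal (s ^ (finrank ℝ E - 1)) * F (s • (θ : E))

theorem lintegral_comp_norm {φ : ℝ → ℝ≥0∞} (hφ : Measurable φ) :
    ∫⁻ y : E, φ ‖y‖ ∂μ = μ.toSphere univ *
      ∫⁻ s in Ioi (0 : ℝ), ENNReal.ofReal (s ^ (finrank ℝ E - 1)) * φ s := by
  have radial (θ : sphere (0 : E) 1) :
      ∫⁻ s in Ioi (0 : ℝ), ENNReal.ofReal (s ^ (finrank ℝ E - 1)) * φ ‖s • (θ : E)‖ =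
        ∫⁻ s in Ioi (0 : ℝ), ENNReal.ofReal (s ^ (finrank ℝ E - 1)) * φ s :=
    setLIntegral_congr_fun measurableSet_Ioi fun s (hs : 0 < s) ↦ by
      simp only [norm_smul, Real.norm_of_nonneg hs.le, norm_eq_of_mem_sphere, mul_one]
  rw [lintegral_eq_lintegral_toSphere μ (by fun_prop)]
  simp only [radial, lintegral_const, mul_comm (μ.toSphere univ)]

theorem setLIntegral_norm_preimage_rpow {S : Set ℝ} (hS : MeasurableSet S) (e : ℝ) :
    ∫⁻ y in (‖·‖) ⁻¹' S, ENNReal.ofReal (‖y‖ ^ (e - finrank ℝ E)) ∂μ =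
      μ.toSphere univ * ∫⁻ s in S ∩ Ioi 0, ENNReal.ofReal (s ^ (e - 1)) := by
  rw [← lintegral_indicator (measurable_norm hS), ← setLIntegral_indicator hS]
  have hφ : Measurable (S.indicator fun s : ℝ ↦ ENNReal.ofReal (s ^ (e - finrank ℝ E))) :=
    Measurable.indicator (by fun_prop) hS
  refine (lintegral_comp_norm μ hφ).trans ?_
  congr 1
  refine setLIntegral_congr_fun measurableSet_Ioi fun s hs ↦ ?_
  by_cases hsS : s ∈ S
  · simp only [hsS, indicator_of_mem, ofReal_pow_pred_mul_ofReal_rpow Module.finrank_pos hs]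
  · simp only [hsS, not_false_eq_true, indicator_of_notMem, mul_zero]

theorem setLIntegral_ball_norm_rpow {e R : ℝ} (he : 0 < e) (hR : 0 ≤ R) :
    ∫⁻ y in ball (0 : E) R, ENNReal.ofReal (‖y‖ ^ (e - finrank ℝ E)) ∂μ =
      μ.toSphere univ * ENNReal.ofReal (R ^ e / e) := by
  have hball : ball (0 : E) R = (‖·‖) ⁻¹' Iio R := by ext; simp
  rw [hball, setLIntegral_norm_preimage_rpow μ measurableSet_Iio, Iio_inter_Ioi,
    lintegral_Ioo_zero_rpow he hR]

theorem setLIntegral_compl_ball_norm_rpow {e R : ℝ} (he : 0 < e) (hR : 0 < R) :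
    ∫⁻ y in (ball (0 : E) R)ᶜ, ENNReal.ofReal (‖y‖ ^ (-e - finrank ℝ E)) ∂μ =
      μ.toSphere univ * ENNReal.ofReal (R ^ (-e) / e) := by
  have hball : (ball (0 : E) R)ᶜ = (‖·‖) ⁻¹' Ici R := by ext; simp
  rw [hball, setLIntegral_norm_preimage_rpow μ measurableSet_Ici,
    inter_eq_left.2 (Ici_subset_Ioi.2 hR), setLIntegral_congr Ioi_ae_eq_Ici.symm,
    lintegral_Ioi_rpow_neg he hR]

end PolarCoordinates

section Homogeneity

theorem le_ofReal_mul_of_forall_mul_le_one {L A : ℝ≥0∞} {C : ℝ} (hC : 0 < C)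
    (h : ∀ a > 0, ENNReal.ofReal a * A ≤ 1 → ENNReal.ofReal a * L ≤ ENNReal.ofReal C) :
    L ≤ ENNReal.ofReal C * A := by
  refine ENNReal.le_mul_of_forall_lt (.inl (by simpa using hC)) (.inl ENNReal.ofReal_ne_top)
    fun C' hC' A' hA' ↦ ?_
  rcases eq_or_ne A' ∞ with rfl | hA'_top
  · rw [ENNReal.mul_top (bot_lt_of_lt hC').ne']
    exact le_top
  have hA'_pos : A' ≠ 0 := (bot_lt_of_lt hA').ne'
  have hinv : ENNReal.ofReal A'.toReal⁻¹ = A'⁻¹ := by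
    rw [← ENNReal.toReal_inv, ENNReal.ofReal_toReal (ENNReal.inv_ne_top.2 hA'_pos)]
  have := h A'.toReal⁻¹ (inv_pos.2 (ENNReal.toReal_pos hA'_pos hA'_top)) (by
    rw [hinv, ← ENNReal.inv_mul_cancel hA'_pos hA'_top]
    gcongr)
  rw [hinv, mul_comm, ← div_eq_mul_inv, ENNReal.div_le_iff hA'_pos hA'_top] at this
  exact this.trans (by gcongr)

theorem lintegral_const_mul_rpow_rpow {X : Type*} [MeasurableSpace X] {μ : Measure X}
    {F : X → ℝ≥0∞} {q : ℝ} (hq : 0 < q) {c : ℝ≥0∞} (hc : c ≠ ∞) :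
    (∫⁻ x, (c * F x) ^ q ∂μ) ^ (1 / q) = c * (∫⁻ x, F x ^ q ∂μ) ^ (1 / q) := by
  simp only [ENNReal.mul_rpow_of_nonneg _ _ hq.le]
  rw [lintegral_const_mul' _ _ (ENNReal.rpow_ne_top_of_nonneg hq.le hc),
    ENNReal.mul_rpow_of_nonneg _ _ (by positivity), ← ENNReal.rpow_mul, mul_one_div_cancel hq.ne',
    ENNReal.rpow_one]

end Homogeneity

section RieszPotential

open Module (finrank)

variable {E : Type*} [NormedAddCommGroup E] [NormedSpace ℝ E]

/-- The Riesz kernel `|y|^(α - d)` in dimension `d`, without the usual normalising constant. At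
`y = 0` it has the junk value `0` when `α < d`. -/
def rieszKernel (α : ℝ) (y : E) : ℝ≥0∞ :=
  ENNReal.ofReal (‖y‖ ^ (α - finrank ℝ E))

variable [MeasurableSpace E]

/-- The part of the (unnormalised) Riesz potential `∫ |y|^(α - d) g (x + y) dy` that comes from
displacements `y ∈ S`; used with `S` a ball and its complement to split the potential. -/
def rieszPotentialOn (μ : Measure E) (α : ℝ) (S : Set E) (g : E → ℝ≥0∞) (x : E) : ℝ≥0∞ :=
  ∫⁻ y in S, rieszKernel α y * g (x + y) ∂μ

/-- The (unnormalised) Riesz potential `∫ |y|^(α - d) g (x + y) dy` of order `α`, written in terms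
of the displacement `y` so that polar coordinates around `x` apply directly. -/
def rieszPotential (μ : Measure E) (α : ℝ) (g : E → ℝ≥0∞) : E → ℝ≥0∞ :=
  rieszPotentialOn μ α univ g

variable {μ : Measure E} {α : ℝ} {S : Set E} {g : E → ℝ≥0∞}

theorem rieszPotential_eq_add_compl (hS : MeasurableSet S) (x : E) :
    rieszPotential μ α g x = rieszPotentialOn μ α S g x + rieszPotentialOn μ α Sᶜ g x := by
  simp only [rieszPotential, rieszPotentialOn, Measure.restrict_univ, lintegral_add_compl _ hS]

theorem rieszPotential_const_mul {c : ℝ≥0∞} (hc : c ≠ ∞) (x : E) :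
    rieszPotential μ α (fun y ↦ c * g y) x = c * rieszPotential μ α g x := by
  simp only [rieszPotential, rieszPotentialOn, ← lintegral_const_mul' _ _ hc, mul_left_comm c]

variable [BorelSpace E]

@[fun_prop]
theorem measurable_rieszKernel : Measurable (rieszKernel α : E → ℝ≥0∞) := by
  unfold rieszKernel
  fun_prop

theorem rieszPotentialOn_le_add_indicator (M : ℝ≥0∞) (x : E) :
    rieszPotentialOn μ α S g x ≤ (∫⁻ y in S, rieszKernel α y ∂μ) * M +
      rieszPotentialOn μ α S ({y | M < g y}.indicator g) x := by
  rw [rieszPotentialOn, rieszPotentialOn, ← lintegral_mul_const _ measurable_rieszKernel,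
    ← lintegral_add_left (by fun_prop)]
  refine lintegral_mono fun y ↦ ?_
  rw [← mul_add]
  gcongr
  by_cases hM : M < g (x + y)
  · simp [hM]
  · exact (not_lt.1 hM).trans le_self_add

theorem rieszPotentialOn_compl_ball_le [μ.IsAddLeftInvariant] {R : ℝ}
    (hα : α ≤ finrank ℝ E) (hR : 0 < R) (x : E) :
    rieszPotentialOn μ α (ball 0 R)ᶜ g x ≤
      ENNReal.ofReal (R ^ (α - finrank ℝ E)) * ∫⁻ y, g y ∂μ := by
  calc rieszPotentialOn μ α (ball 0 R)ᶜ g x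
      ≤ ∫⁻ y in (ball 0 R)ᶜ, ENNReal.ofReal (R ^ (α - finrank ℝ E)) * g (x + y) ∂μ := by
        refine setLIntegral_mono' measurableSet_ball.compl fun y hy ↦ ?_
        have hy : R ≤ ‖y‖ := by simpa using hy
        unfold rieszKernel
        gcongr ENNReal.ofReal ?_ * _
        exact Real.rpow_le_rpow_of_nonpos hR hy (by linarith)
    _ ≤ ∫⁻ y, ENNReal.ofReal (R ^ (α - finrank ℝ E)) * g (x + y) ∂μ :=
        setLIntegral_le_lintegral _ _
    _ = _ := by
        rw [lintegral_const_mul' _ _ ENNReal.ofReal_ne_top, lintegral_add_left_eq_self g x]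

theorem rieszPotentialOn_le_rpow_mul_rpow [μ.IsAddLeftInvariant] {p p' : ℝ}
    (hpp' : p.HolderConjugate p') (hg : Measurable g) (x : E) :
    rieszPotentialOn μ α S g x ≤ (∫⁻ y in S, rieszKernel α y ^ p' ∂μ) ^ (1 / p') *
      (∫⁻ y, g y ^ p ∂μ) ^ (1 / p) := by
  refine (ENNReal.lintegral_mul_le_Lp_mul_Lq (μ.restrict S) hpp'.symm
    measurable_rieszKernel.aemeasurable (by fun_prop)).trans ?_
  gcongr ?_ * ?_ ^ _
  · rfl
  · exact one_div_nonneg.2 hpp'.nonneg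
  · calc ∫⁻ y in S, g (x + y) ^ p ∂μ ≤ ∫⁻ y, g (x + y) ^ p ∂μ := setLIntegral_le_lintegral _ _
      _ = ∫⁻ y, g y ^ p ∂μ := lintegral_add_left_eq_self (fun y ↦ g y ^ p) x

variable [FiniteDimensional ℝ E] [μ.IsAddHaarMeasure]

theorem measurable_rieszPotentialOn (hg : Measurable g) :
    Measurable (rieszPotentialOn μ α S g) :=
  Measurable.lintegral_prod_right' (f := fun z : E × E ↦ rieszKernel α z.2 * g (z.1 + z.2))
    (by fun_prop)

theorem measurable_rieszPotential (hg : Measurable g) : Measurable (rieszPotential μ α g) :=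
  measurable_rieszPotentialOn hg

theorem lintegral_rieszPotentialOn (hg : Measurable g) :
    ∫⁻ x, rieszPotentialOn μ α S g x ∂μ =
      (∫⁻ y in S, rieszKernel α y ∂μ) * ∫⁻ x, g x ∂μ := by
  unfold rieszPotentialOn
  rw [lintegral_lintegral_swap (by fun_prop), ← lintegral_mul_const _ measurable_rieszKernel]
  refine lintegral_congr fun y ↦ ?_
  rw [lintegral_const_mul _ (by fun_prop), lintegral_add_right_eq_self g y]

theorem mul_measure_lt_rieszPotential_le (hS : MeasurableSet S) (hg : Measurable g)
    {t M : ℝ≥0∞} (ht : t ≠ 0) (ht' : t ≠ ∞)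
    (hnear : (∫⁻ y in S, rieszKernel α y ∂μ) * M = t)
    (hfar : ∀ x, rieszPotentialOn μ α Sᶜ g x ≤ t) :
    M * μ {x | 3 * t < rieszPotential μ α g x} ≤ ∫⁻ y in {y | M < g y}, g y ∂μ := by
  set k := ∫⁻ y in S, rieszKernel α y ∂μ
  have hk : k ≠ 0 := by
    rintro hk
    simp [hk, ht.symm] at hnear
  have hk' : k ≠ ∞ := by
    rintro hk
    rcases eq_or_ne M 0 with rfl | hM
    · exact ht (by rw [← hnear, mul_zero])
    · exact ht' (by rw [← hnear, hk, ENNReal.top_mul hM])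
  have hgM : MeasurableSet {y | M < g y} := measurableSet_lt measurable_const hg
  have level_subset : {x | 3 * t < rieszPotential μ α g x} ⊆
      {x | t ≤ rieszPotentialOn μ α S ({y | M < g y}.indicator g) x} := by
    intro x (hx : 3 * t < rieszPotential μ α g x)
    by_contra hlt
    rw [mem_ofPred_eq, not_le] at hlt
    refine hx.not_ge ?_
    calc rieszPotential μ α g x
        = rieszPotentialOn μ α S g x + rieszPotentialOn μ α Sᶜ g x :=
          rieszPotential_eq_add_compl hS x
      _ ≤ (t + t) + t := by
          refine add_le_add ((rieszPotentialOn_le_add_indicator M x).trans ?_) (hfar x)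
          exact add_le_add hnear.le hlt.le
      _ = 3 * t := by ring
  refine (ENNReal.mul_le_mul_iff_right hk hk').1 ?_
  calc k * (M * μ {x | 3 * t < rieszPotential μ α g x})
      ≤ t * μ {x | t ≤ rieszPotentialOn μ α S ({y | M < g y}.indicator g) x} := by
        rw [← mul_assoc, hnear]
        gcongr
    _ ≤ ∫⁻ x, rieszPotentialOn μ α S ({y | M < g y}.indicator g) x ∂μ :=
        mul_meas_ge_le_lintegral (measurable_rieszPotentialOn (hg.indicator hgM)) t
    _ = k * ∫⁻ y in {y | M < g y}, g y ∂μ := by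
        rw [lintegral_rieszPotentialOn (hg.indicator hgM), lintegral_indicator hgM]

variable [Nontrivial E] {p q : ℝ}

theorem setLIntegral_compl_ball_rieszKernel_rpow {p' R : ℝ} (hpp' : p.HolderConjugate p')
    (hq : 0 < q) (hpq : 1 / q = 1 / p - α / finrank ℝ E) (hR : 0 < R) :
    ∫⁻ y in (ball (0 : E) R)ᶜ, rieszKernel α y ^ p' ∂μ = μ.toSphere univ *
      ENNReal.ofReal (R ^ (-(finrank ℝ E / q * p')) / (finrank ℝ E / q * p')) := by
  have hd : (0 : ℝ) < finrank ℝ E := mod_cast Module.finrank_pos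
  have hp' := hpp'.symm.pos
  have hexp : (α - finrank ℝ E) * p' = -(finrank ℝ E / q * p') - finrank ℝ E := by
    have hdq : finrank ℝ E / q = finrank ℝ E / p - α := by
      rw [div_eq_mul_one_div, hpq]
      field_simp
    linear_combination (finrank ℝ E : ℝ) * hpp'.symm.div_conj_eq_sub_one + p' * hdq
  rw [← setLIntegral_compl_ball_norm_rpow μ (by positivity) hR]
  refine lintegral_congr fun y ↦ ?_
  rw [rieszKernel, ENNReal.ofReal_rpow_of_nonneg (by positivity) hp'.le,
    ← Real.rpow_mul (norm_nonneg _), hexp]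

theorem rieszPotentialOn_compl_ball_le_mul_rpow {p' R : ℝ} (hpp' : p.HolderConjugate p')
    (hq : 0 < q) (hpq : 1 / q = 1 / p - α / finrank ℝ E) (hR : 0 < R) (hg : Measurable g) (x : E) :
    rieszPotentialOn μ α (ball 0 R)ᶜ g x ≤
      ENNReal.ofReal ((μ.toSphere.real univ / (finrank ℝ E / q * p')) ^ (1 / p') *
        R ^ (-(finrank ℝ E / q))) * (∫⁻ y, g y ^ p ∂μ) ^ (1 / p) := by
  have hp' := hpp'.symm.pos
  have hd : (0 : ℝ) < finrank ℝ E := mod_cast Module.finrank_pos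
  refine (rieszPotentialOn_le_rpow_mul_rpow hpp' hg x).trans_eq ?_
  rw [setLIntegral_compl_ball_rieszKernel_rpow hpp' hq hpq hR, ← ofReal_measureReal,
    ← ENNReal.ofReal_mul measureReal_nonneg, ENNReal.ofReal_rpow_of_nonneg (by positivity)
    (by positivity), mul_div_left_comm, mul_comm (R ^ _), Real.mul_rpow (by positivity)
    (by positivity), ← Real.rpow_mul hR.le]
  congr 4
  field_simp

theorem exists_rieszPotentialOn_compl_ball_le (hp : 1 ≤ p) (hq : 0 < q)
    (hpq : 1 / q = 1 / p - α / finrank ℝ E) :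
    ∃ B > 0, ∀ R > 0, ∀ g : E → ℝ≥0∞, Measurable g → ∫⁻ y, g y ^ p ∂μ ≤ 1 → ∀ x,
      rieszPotentialOn μ α (ball 0 R)ᶜ g x ≤ ENNReal.ofReal (B * R ^ (-(finrank ℝ E / q))) := by
  have hd : (0 : ℝ) < finrank ℝ E := mod_cast Module.finrank_pos
  rcases hp.eq_or_lt with rfl | hp
  · have hexp : -(finrank ℝ E / q) = α - finrank ℝ E := by
      rw [div_eq_mul_one_div, hpq]
      field_simp
      ring
    have hα : α ≤ finrank ℝ E := by linarith [div_pos hd hq]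
    refine ⟨1, one_pos, fun R hR g _ hg1 x ↦ ?_⟩
    simp only [ENNReal.rpow_one] at hg1
    calc rieszPotentialOn μ α (ball 0 R)ᶜ g x
        ≤ ENNReal.ofReal (R ^ (α - finrank ℝ E)) * ∫⁻ y, g y ∂μ :=
          rieszPotentialOn_compl_ball_le hα hR x
      _ ≤ ENNReal.ofReal (1 * R ^ (-(finrank ℝ E / q))) := by
          rw [one_mul, hexp]
          exact mul_le_of_le_one_right' hg1
  · have hpp' := Real.HolderConjugate.conjExponent hp
    have hp' : 0 < p.conjExponent := hpp'.symm.pos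
    have hT := toSphere_real_univ_pos μ
    refine ⟨(μ.toSphere.real univ / (finrank ℝ E / q * p.conjExponent)) ^ (1 / p.conjExponent),
      by positivity, fun R hR g hg hg1 x ↦
        (rieszPotentialOn_compl_ball_le_mul_rpow hpp' hq hpq hR hg x).trans ?_⟩
    exact mul_le_of_le_one_right' (ENNReal.rpow_le_one hg1 (by positivity))

theorem exists_mul_measure_lt_rieszPotential_le (hα : 0 < α) (hp : 1 ≤ p) (hq : 0 < q)
    (hpq : 1 / q = 1 / p - α / finrank ℝ E) :
    ∃ c > 0, ∀ g : E → ℝ≥0∞, Measurable g → ∫⁻ y, g y ^ p ∂μ ≤ 1 → ∀ t > 0,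
      ENNReal.ofReal (c * t ^ (q / p)) * μ {x | ENNReal.ofReal t < rieszPotential μ α g x} ≤
        ∫⁻ y in {y | ENNReal.ofReal (c * t ^ (q / p)) < g y}, g y ∂μ := by
  have hd : (0 : ℝ) < finrank ℝ E := mod_cast Module.finrank_pos
  obtain ⟨B, hB, hfar⟩ := exists_rieszPotentialOn_compl_ball_le (μ := μ) hp hq hpq
  set T := μ.toSphere.real univ
  have hT : 0 < T := toSphere_real_univ_pos μ
  obtain ⟨γ, hγ⟩ : ∃ γ, γ = q / finrank ℝ E * α := ⟨_, rfl⟩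
  have hqp : q / p = 1 + γ := by
    have := congrArg (q * ·) hpq
    simp only [mul_one_div_cancel hq.ne', mul_sub] at this
    rw [hγ]
    linear_combination -this
  refine ⟨α / T * B ^ (-γ) * (1 / 3) ^ (q / p), by positivity, fun g hg hg1 t ht ↦ ?_⟩
  obtain ⟨u, hu, rfl⟩ : ∃ u > 0, t = 3 * u := ⟨t / 3, by positivity, by ring⟩
  -- `R` balances the far part against `u`, and the truncation level then balances the near part.
  set R := (B / u) ^ (q / finrank ℝ E)
  have hR : 0 < R := by positivity
  have far_eq : B * R ^ (-(finrank ℝ E / q)) = u := by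
    rw [← Real.rpow_mul (by positivity), mul_neg, div_mul_div_cancel₀ hd.ne', div_self hq.ne',
      Real.rpow_neg_one]
    field_simp
  have near_eq : T * (R ^ α / α) * (α / T * B ^ (-γ) * (1 / 3) ^ (q / p) * (3 * u) ^ (q / p)) =
      u := by
    rw [← Real.rpow_mul (by positivity), ← hγ, mul_assoc _ ((1 / 3 : ℝ) ^ _),
      ← Real.mul_rpow (by positivity) (by positivity), one_div, inv_mul_cancel_left₀ three_ne_zero,
      hqp, Real.rpow_add hu, Real.rpow_one, Real.div_rpow hB.le hu.le, Real.rpow_neg hB.le]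
    field_simp
  have hthree : ENNReal.ofReal (3 * u) = 3 * ENNReal.ofReal u := by
    simp [ENNReal.ofReal_mul]
  rw [hthree]
  refine mul_measure_lt_rieszPotential_le measurableSet_ball hg (by simpa using hu)
    ENNReal.ofReal_ne_top ?_ fun x ↦ far_eq ▸ hfar R hR g hg hg1 x
  simp only [rieszKernel]
  rw [setLIntegral_ball_norm_rpow μ hα hR.le, ← ofReal_measureReal, ← ENNReal.ofReal_mul hT.le,
    ← ENNReal.ofReal_mul (by positivity), near_eq]

theorem exists_lintegral_rieszPotential_rpow_le (hα : 0 < α) (hp : 1 < p) (hq : 0 < q)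
    (hpq : 1 / q = 1 / p - α / finrank ℝ E) :
    ∃ C > 0, ∀ g : E → ℝ≥0∞, Measurable g →
      (∫⁻ x, rieszPotential μ α g x ^ q ∂μ) ^ (1 / q) ≤
        ENNReal.ofReal C * (∫⁻ y, g y ^ p ∂μ) ^ (1 / p) := by
  have hp0 : 0 < p := one_pos.trans hp
  obtain ⟨c, hc, hlevel⟩ := exists_mul_measure_lt_rieszPotential_le (μ := μ) hα hp.le hq hpq
  set C := p / (p - 1) * c ^ (-p)
  have hC : 0 < C := mul_pos (div_pos hp0 (sub_pos.2 hp)) (by positivity)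
  refine ⟨C ^ (1 / q), by positivity, fun g hg ↦ ?_⟩
  refine le_ofReal_mul_of_forall_mul_le_one (by positivity) fun a _ hag ↦ ?_
  rw [← lintegral_const_mul_rpow_rpow hp0 ENNReal.ofReal_ne_top,
    one_div, ENNReal.rpow_inv_le_iff hp0, ENNReal.one_rpow] at hag
  rw [← lintegral_const_mul_rpow_rpow hq ENNReal.ofReal_ne_top,
    ← ENNReal.ofReal_rpow_of_pos hC]
  simp only [← rieszPotential_const_mul ENNReal.ofReal_ne_top]
  gcongr
  have hag' : Measurable fun y ↦ ENNReal.ofReal a * g y := hg.const_mul _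
  exact (lintegral_rpow_le_of_mul_measure_lt_le hp hq hc (measurable_rieszPotential hag') hag'
    (hlevel _ hag' hag)).trans (mul_le_of_le_one_right' hag)

theorem exists_mul_measure_lt_rieszPotential_rpow_le (hα : 0 < α) (hq : 0 < q)
    (hαq : 1 / q = 1 - α / finrank ℝ E) :
    ∃ C > 0, ∀ g : E → ℝ≥0∞, Measurable g → ∀ t > 0,
      ENNReal.ofReal t * μ {x | ENNReal.ofReal t < rieszPotential μ α g x} ^ (1 / q) ≤
        ENNReal.ofReal C * ∫⁻ y, g y ∂μ := by
  obtain ⟨c, hc, hlevel⟩ := exists_mul_measure_lt_rieszPotential_le (μ := μ) hα le_rfl hq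
    (by rw [hαq, div_one])
  refine ⟨c ^ (-(1 / q)), by positivity, fun g hg t ht ↦ ?_⟩
  refine le_ofReal_mul_of_forall_mul_le_one (by positivity) fun a ha hag ↦ ?_
  rw [← lintegral_const_mul' _ _ ENNReal.ofReal_ne_top] at hag
  have level_eq : {x | ENNReal.ofReal (a * t) <
      rieszPotential μ α (fun y ↦ ENNReal.ofReal a * g y) x} =
      {x | ENNReal.ofReal t < rieszPotential μ α g x} := by
    simp only [rieszPotential_const_mul ENNReal.ofReal_ne_top, ENNReal.ofReal_mul ha.le,
      ENNReal.mul_lt_mul_iff_right (ENNReal.ofReal_pos.2 ha).ne' ENNReal.ofReal_ne_top]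
  have hscaled : ENNReal.ofReal (c * (a * t) ^ q) *
      μ {x | ENNReal.ofReal t < rieszPotential μ α g x} ≤ 1 := by
    rw [← level_eq, ← div_one q]
    exact (hlevel _ (hg.const_mul _) (by simpa only [ENNReal.rpow_one] using hag) _
      (mul_pos ha ht)).trans ((setLIntegral_le_lintegral _ _).trans hag)
  have hpow : a * t = c ^ (-(1 / q)) * (c * (a * t) ^ q) ^ (1 / q) := by
    rw [Real.mul_rpow hc.le (by positivity), ← Real.rpow_mul (by positivity),
      mul_one_div_cancel hq.ne', Real.rpow_one, ← mul_assoc, ← Real.rpow_add hc, neg_add_cancel,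
      Real.rpow_zero, one_mul]
  rw [← mul_assoc, ← ENNReal.ofReal_mul ha.le, hpow, ENNReal.ofReal_mul (by positivity),
    ← ENNReal.ofReal_rpow_of_pos (show 0 < c * (a * t) ^ q by positivity), mul_assoc,
    ← ENNReal.mul_rpow_of_nonneg _ _ (by positivity)]
  exact mul_le_of_le_one_right' (ENNReal.rpow_le_one hscaled (by positivity))

end RieszPotential

section UniformlyDistributed

variable {X : Type*} [PseudoMetricSpace X] [MeasurableSpace X]

/-- A measure on a metric space is uniformly distributed if the measure of a closed ball depends
only on its radius. -/
def IsUniformlyDistributed (σ : Measure X) : Prop :=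
  ∀ (ε : ℝ) (y z : X), σ (closedBall y ε) = σ (closedBall z ε)

variable [SecondCountableTopology X] {σ τ : Measure X}

theorem IsUniformlyDistributed.measure_eq_zero_of_closedBall (hτ : IsUniformlyDistributed τ)
    {z : X} {ε : ℝ} (hε : 0 < ε) (h : τ (closedBall z ε) = 0) : τ = 0 := by
  refine Measure.measure_univ_eq_zero.1 (measure_null_of_locally_null _ fun x _ ↦ ?_)
  exact ⟨closedBall x ε, mem_nhdsWithin_of_mem_nhds (closedBall_mem_nhds x hε), hτ ε x z ▸ h⟩

variable [BorelSpace X] [IsFiniteMeasure σ] [IsFiniteMeasure τ]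

theorem setLIntegral_measure_closedBall (ε : ℝ) {F : Set X} (hF : MeasurableSet F) :
    ∫⁻ x in F, τ (closedBall x ε) ∂σ = ∫⁻ y, σ (closedBall y ε ∩ F) ∂τ := by
  have hclose : MeasurableSet {w : X × X | dist w.2 w.1 ≤ ε} :=
    (isClosed_le (by fun_prop) continuous_const).measurableSet
  calc ∫⁻ x in F, τ (closedBall x ε) ∂σ = (σ.restrict F).prod τ {w | dist w.2 w.1 ≤ ε} :=
        (Measure.prod_apply hclose).symm
    _ = ∫⁻ y, σ.restrict F {x | dist y x ≤ ε} ∂τ := Measure.prod_apply_symm hclose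
    _ = ∫⁻ y, σ (closedBall y ε ∩ F) ∂τ := by
        simp only [← Measure.restrict_apply' hF, closedBall, dist_comm]

theorem IsUniformlyDistributed.mul_measure_le_mul_measure_cthickening
    (hσ : IsUniformlyDistributed σ) (hτ : IsUniformlyDistributed τ) (z : X) (ε : ℝ) {F : Set X}
    (hF : MeasurableSet F) :
    τ (closedBall z ε) * σ F ≤ σ (closedBall z ε) * τ (cthickening ε F) := by
  calc τ (closedBall z ε) * σ F = ∫⁻ x in F, τ (closedBall x ε) ∂σ := by
        simp only [hτ ε _ z, setLIntegral_const]
    _ = ∫⁻ y, σ (closedBall y ε ∩ F) ∂τ := setLIntegral_measure_closedBall ε hF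
    _ ≤ ∫⁻ y, (cthickening ε F).indicator (fun _ ↦ σ (closedBall z ε)) y ∂τ := by
        refine lintegral_mono fun y ↦ ?_
        by_cases hy : y ∈ cthickening ε F
        · rw [indicator_of_mem hy, ← hσ ε y z]
          exact measure_mono inter_subset_left
        · have disjoint : closedBall y ε ∩ F = ∅ := eq_empty_of_forall_notMem fun x hx ↦
            hy (mem_cthickening_of_dist_le y x ε F hx.2 (by simpa [dist_comm] using hx.1))
          simp [disjoint]
    _ = σ (closedBall z ε) * τ (cthickening ε F) :=
        lintegral_indicator_const isClosed_cthickening.measurableSet _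

theorem IsUniformlyDistributed.measure_univ_mul_le_cthickening (hσ : IsUniformlyDistributed σ)
    (hτ : IsUniformlyDistributed τ) {F : Set X} (hF : MeasurableSet F) {ε : ℝ} (hε : 0 < ε) :
    τ univ * σ F ≤ σ univ * τ (cthickening ε F) := by
  obtain rfl | ⟨z, -⟩ := F.eq_empty_or_nonempty
  · simp
  obtain hball | hball := eq_or_ne (τ (closedBall z ε)) 0
  · simp [hτ.measure_eq_zero_of_closedBall hε hball]
  have total : τ (closedBall z ε) * σ univ = σ (closedBall z ε) * τ univ := by
    have cthickening_univ : cthickening ε (univ : Set X) = univ :=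
      univ_subset_iff.1 (self_subset_cthickening _)
    apply le_antisymm
    · simpa only [cthickening_univ] using
        hσ.mul_measure_le_mul_measure_cthickening hτ z ε .univ
    · simpa only [cthickening_univ] using
        hτ.mul_measure_le_mul_measure_cthickening hσ z ε .univ
  rw [← ENNReal.mul_le_mul_iff_right hball (measure_ne_top _ _)]
  calc τ (closedBall z ε) * (τ univ * σ F) = τ univ * (τ (closedBall z ε) * σ F) :=
        mul_left_comm _ _ _
    _ ≤ τ univ * (σ (closedBall z ε) * τ (cthickening ε F)) :=
        mul_le_mul' le_rfl (hσ.mul_measure_le_mul_measure_cthickening hτ z ε hF)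
    _ = τ (closedBall z ε) * (σ univ * τ (cthickening ε F)) := by
        rw [← mul_assoc, mul_comm (τ univ), ← total, mul_assoc]

theorem IsUniformlyDistributed.measure_univ_mul_le (hσ : IsUniformlyDistributed σ)
    (hτ : IsUniformlyDistributed τ) {F : Set X} (hF : IsClosed F) :
    τ univ * σ F ≤ σ univ * τ F := by
  have shrink : Tendsto (fun ε ↦ σ univ * τ (cthickening ε F)) (𝓝[>] 0) (𝓝 (σ univ * τ F)) :=
    ENNReal.Tendsto.const_mul ((tendsto_measure_cthickening_of_isClosed
      ⟨1, one_pos, measure_ne_top _ _⟩ hF).mono_left nhdsWithin_le_nhds)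
      (.inr (measure_ne_top _ _))
  refine ge_of_tendsto shrink ?_
  filter_upwards [self_mem_nhdsWithin] with ε hε
  exact hσ.measure_univ_mul_le_cthickening hτ hF.measurableSet hε

theorem IsUniformlyDistributed.measure_univ_smul_eq (hσ : IsUniformlyDistributed σ)
    (hτ : IsUniformlyDistributed τ) : τ univ • σ = σ univ • τ := by
  have : IsFiniteMeasure (τ univ • σ) := σ.smul_finite (measure_ne_top _ _)
  refine ext_of_generate_finite {F | IsClosed F}
    (BorelSpace.measurable_eq.trans borel_eq_generateFrom_isClosed) isPiSystem_isClosed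
    (fun F hF ↦ ?_) (mul_comm _ _)
  exact le_antisymm (hσ.measure_univ_mul_le hτ hF) (hτ.measure_univ_mul_le hσ hF)

theorem IsUniformlyDistributed.laverage_eq_laverage [NeZero σ] [NeZero τ]
    (hσ : IsUniformlyDistributed σ) (hτ : IsUniformlyDistributed τ) (h : X → ℝ≥0∞) :
    ⨍⁻ y, h y ∂σ = ⨍⁻ y, h y ∂τ := by
  have hσ_univ : σ univ ≠ 0 := NeZero.ne _
  have hτ_univ : τ univ ≠ 0 := NeZero.ne _
  have hmul := congr_arg (fun ν ↦ ∫⁻ y, h y ∂ν) (hσ.measure_univ_smul_eq hτ)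
  simp only [lintegral_smul_measure, smul_eq_mul] at hmul
  rw [laverage_eq, laverage_eq, ENNReal.div_eq_div_iff hτ_univ (measure_ne_top _ _) hσ_univ
    (measure_ne_top _ _), hmul]

end UniformlyDistributed

section SphereAverage

variable {E : Type*} [NormedAddCommGroup E]

section NormedSpace

variable [NormedSpace ℝ E]

theorem range_add_smul_sphere (x : E) {r : ℝ} (hr : 0 < r) :
    range (fun θ : sphere (0 : E) 1 ↦ x + r • (θ : E)) = sphere x r := by
  ext y
  simp only [mem_range, Subtype.exists, mem_sphere_iff_norm, sub_zero]
  constructor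
  · rintro ⟨θ, hθ, rfl⟩
    rw [add_sub_cancel_left, norm_smul, hθ, mul_one, Real.norm_of_nonneg hr.le]
  · intro hy
    exact ⟨r⁻¹ • (y - x), by rw [norm_smul, hy, norm_inv, Real.norm_of_nonneg hr.le,
      inv_mul_cancel₀ hr.ne'], by rw [smul_inv_smul₀ hr.ne', add_sub_cancel]⟩

variable [MeasurableSpace E] [BorelSpace E]

theorem measurableEmbedding_add_smul_sphere (x : E) {r : ℝ} (hr : r ≠ 0) :
    MeasurableEmbedding fun θ : sphere (0 : E) 1 ↦ x + r • (θ : E) :=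
  ((Homeomorph.smulOfNeZero r hr).trans (Homeomorph.addLeft x)).measurableEmbedding.comp
    (MeasurableEmbedding.subtype_coe isClosed_sphere.measurableSet)

end NormedSpace

variable [InnerProductSpace ℝ E] [MeasurableSpace E] [BorelSpace E]

theorem isUniformlyDistributed_of_forall_linearIsometryEquiv {σ : Measure (sphere (0 : E) 1)}
    (h : ∀ (R : E ≃ₗᵢ[ℝ] E) {s t : Set (sphere (0 : E) 1)}, MeasurableSet s → MeasurableSet t →
      R '' (Subtype.val '' s) = Subtype.val '' t → σ s = σ t) :
    IsUniformlyDistributed σ := by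
  intro ε y z
  have coe_closedBall (θ : sphere (0 : E) 1) :
      Subtype.val '' closedBall θ ε = sphere (0 : E) 1 ∩ closedBall (θ : E) ε :=
    Subtype.image_preimage_coe (sphere (0 : E) 1) (closedBall (θ : E) ε)
  set R : E ≃ₗᵢ[ℝ] E := (ℝ ∙ ((y : E) - z))ᗮ.reflection
  have hR : R y = z := Submodule.reflection_sub (by simp)
  refine h R measurableSet_closedBall measurableSet_closedBall ?_
  rw [coe_closedBall, coe_closedBall, image_inter R.injective, R.image_sphere, R.image_closedBall,
    map_zero, hR]

theorem isUniformlyDistributed_comap_hausdorffMeasure (d : ℝ) (x : E) {r : ℝ} (hr : 0 < r) :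
    IsUniformlyDistributed (Measure.comap (fun θ : sphere (0 : E) 1 ↦ x + r • (θ : E)) μH[d]) := by
  refine isUniformlyDistributed_of_forall_linearIsometryEquiv fun R s t _ _ hst ↦ ?_
  have hΦ := measurableEmbedding_add_smul_sphere x hr.ne'
  set T : E ≃ᵢ E :=
    ((IsometryEquiv.subRight x).trans R.toIsometryEquiv).trans (IsometryEquiv.addLeft x)
  have hT : T '' ((fun θ : sphere (0 : E) 1 ↦ x + r • (θ : E)) '' s) =
      (fun θ : sphere (0 : E) 1 ↦ x + r • (θ : E)) '' t := by
    rw [← image_image (fun y : E ↦ x + r • y) Subtype.val t, ← hst]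
    simp only [image_image, T, IsometryEquiv.trans_apply, IsometryEquiv.subRight_apply,
      IsometryEquiv.addLeft_apply, add_sub_cancel_left, LinearIsometryEquiv.coe_toIsometryEquiv,
      map_smul]
  rw [hΦ.comap_apply, hΦ.comap_apply, ← hT, T.hausdorffMeasure_image]

variable [FiniteDimensional ℝ E]

open scoped Pointwise in
theorem isUniformlyDistributed_toSphere :
    IsUniformlyDistributed (volume : Measure E).toSphere := by
  refine isUniformlyDistributed_of_forall_linearIsometryEquiv fun R s t hs ht hst ↦ ?_
  have hcone : Ioo (0 : ℝ) 1 • (Subtype.val '' t) = R '' (Ioo (0 : ℝ) 1 • (Subtype.val '' s)) := by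
    rw [← hst, ← image2_smul, ← image2_smul, image_image2, image2_image_right]
    simp only [map_smul]
  rw [Measure.toSphere_apply' _ hs, Measure.toSphere_apply' _ ht, hcone,
    R.image_eq_preimage_symm,
    R.symm.measurePreserving.measure_preimage_emb R.symm.toHomeomorph.measurableEmbedding]

theorem setLAverage_sphere_le_laverage_toSphere [Nontrivial E] (d : ℝ) (x : E) {r : ℝ}
    (hr : 0 < r) (h : E → ℝ≥0∞) :
    ⨍⁻ y in sphere x r, h y ∂μH[d] ≤
      ⨍⁻ θ : sphere (0 : E) 1, h (x + r • (θ : E)) ∂(volume : Measure E).toSphere := by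
  have hΦ := measurableEmbedding_add_smul_sphere x hr.ne'
  set σ := Measure.comap (fun θ : sphere (0 : E) 1 ↦ x + r • (θ : E)) μH[d]
  have map_σ : σ.map (fun θ : sphere (0 : E) 1 ↦ x + r • (θ : E)) =
      μH[d].restrict (sphere x r) := by
    rw [hΦ.map_comap, range_add_smul_sphere x hr]
  have average_σ : ⨍⁻ y in sphere x r, h y ∂μH[d] = ⨍⁻ θ, h (x + r • (θ : E)) ∂σ := by
    rw [← map_σ, laverage_eq, laverage_eq, hΦ.lintegral_map, hΦ.map_apply, preimage_univ]
  rw [average_σ]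
  obtain hσ_zero | hσ_zero := eq_or_ne σ 0
  · simp [hσ_zero]
  obtain hσ_top | hσ_top := eq_or_ne (σ univ) ∞
  · simp [laverage_eq, hσ_top]
  have : NeZero σ := ⟨hσ_zero⟩
  have : IsFiniteMeasure σ := ⟨hσ_top.lt_top⟩
  have : NeZero (volume : Measure E).toSphere := ⟨Measure.toSphere_ne_zero _⟩
  exact ((isUniformlyDistributed_comap_hausdorffMeasure d x hr).laverage_eq_laverage
    isUniformlyDistributed_toSphere _).le

end SphereAverage

section PointwiseBound

theorem setLIntegral_Iic_neg_comp_neg (φ : ℝ → ℝ≥0∞) (r : ℝ) :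
    ∫⁻ t in Iic (-r), φ (-t) = ∫⁻ s in Ioi r, φ s := by
  have hpreimage : (fun t : ℝ ↦ -t) ⁻¹' Ici r = Iic (-r) := by ext; simp
  rw [setLIntegral_congr Ioi_ae_eq_Ici, ← hpreimage]
  exact (Measure.measurePreserving_neg volume).setLIntegral_comp_preimage_emb
    (MeasurableEquiv.neg ℝ).measurableEmbedding φ (Ici r)

variable {E : Type*} [NormedAddCommGroup E]

theorem enorm_le_setLIntegral_Ioi_enorm_fderiv [NormedSpace ℝ E] {F : Type*}
    [NormedAddCommGroup F] [NormedSpace ℝ F] {f : E → F} (hf : ContDiff ℝ 1 f)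
    (hc : HasCompactSupport f) (x : E) {θ : E} (hθ : ‖θ‖ = 1) (r : ℝ) :
    ‖f (x + r • θ)‖ₑ ≤ ∫⁻ s in Ioi r, ‖fderiv ℝ f (x + s • θ)‖ₑ := by
  have isometry_ray : Isometry fun t : ℝ ↦ x + (-t) • θ := Isometry.of_dist_eq fun s t ↦ by
    rw [dist_add_left, dist_eq_norm, ← sub_smul, norm_smul, hθ, mul_one, ← dist_eq_norm,
      dist_neg_neg]
  have hray : ContDiff ℝ 1 fun t : ℝ ↦ f (x + (-t) • θ) := hf.comp (by fun_prop)
  have enorm_deriv_le (t : ℝ) :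
      ‖deriv (fun t : ℝ ↦ f (x + (-t) • θ)) t‖ₑ ≤ ‖fderiv ℝ f (x + (-t) • θ)‖ₑ := by
    have hderiv : HasDerivAt (fun t : ℝ ↦ x + (-t) • θ) (-θ) t := by
      simpa using ((hasDerivAt_id t).neg.smul_const θ).const_add x
    have hfderiv := (hf.differentiable one_ne_zero (x + (-t) • θ)).hasFDerivAt
    have hcomp : HasDerivAt (fun t : ℝ ↦ f (x + (-t) • θ)) (fderiv ℝ f (x + (-t) • θ) (-θ)) t :=
      hfderiv.comp_hasDerivAt t hderiv
    rw [hcomp.deriv, ← ofReal_norm, ← ofReal_norm]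
    gcongr
    simpa [hθ] using (fderiv ℝ f (x + (-t) • θ)).le_opNorm (-θ)
  calc ‖f (x + r • θ)‖ₑ = ‖f (x + (-(-r)) • θ)‖ₑ := by rw [neg_neg]
    _ ≤ ∫⁻ t in Iic (-r), ‖deriv (fun t : ℝ ↦ f (x + (-t) • θ)) t‖ₑ :=
        (hc.comp_isClosedEmbedding isometry_ray.isClosedEmbedding).enorm_le_lintegral_Ici_deriv
          hray (-r)
    _ ≤ ∫⁻ t in Iic (-r), ‖fderiv ℝ f (x + (-t) • θ)‖ₑ := lintegral_mono enorm_deriv_le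
    _ = ∫⁻ s in Ioi r, ‖fderiv ℝ f (x + s • θ)‖ₑ :=
        setLIntegral_Iic_neg_comp_neg (fun s ↦ ‖fderiv ℝ f (x + s • θ)‖ₑ) r

variable [MeasurableSpace E] [BorelSpace E]

theorem mul_lintegral_toSphere_Ioi_le_rieszPotential [NormedSpace ℝ E] [FiniteDimensional ℝ E]
    [Nontrivial E] (μ : Measure E) [μ.IsAddHaarMeasure] {α : ℝ} (hα : 1 ≤ α) {g : E → ℝ≥0∞}
    (hg : Measurable g) (x : E) {r : ℝ} (hr : 0 < r) :
    ENNReal.ofReal (r ^ (α - 1)) * ∫⁻ θ : sphere (0 : E) 1,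
      (∫⁻ s in Ioi r, g (x + s • (θ : E))) ∂μ.toSphere ≤ rieszPotential μ α g x := by
  have hkernel : Measurable fun y ↦ rieszKernel α y * g (x + y) := by fun_prop
  rw [rieszPotential, rieszPotentialOn, Measure.restrict_univ,
    lintegral_eq_lintegral_toSphere μ hkernel, ← lintegral_const_mul' _ _ ENNReal.ofReal_ne_top]
  refine lintegral_mono fun θ ↦ ?_
  rw [← lintegral_const_mul' _ _ ENNReal.ofReal_ne_top]
  refine (setLIntegral_mono' measurableSet_Ioi fun s (hs : r < s) ↦ ?_).trans
    (lintegral_mono_set (Ioi_subset_Ioi hr.le))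
  have hs_pos : 0 < s := hr.trans hs
  rw [← mul_assoc, rieszKernel, norm_smul, norm_eq_of_mem_sphere, mul_one,
    Real.norm_of_nonneg hs_pos.le, ofReal_pow_pred_mul_ofReal_rpow Module.finrank_pos hs_pos]
  gcongr

theorem mul_setLAverage_sphere_le_rieszPotential [InnerProductSpace ℝ E] [FiniteDimensional ℝ E]
    [Nontrivial E] {F : Type*} [NormedAddCommGroup F] [NormedSpace ℝ F] {f : E → F}
    (hf : ContDiff ℝ 1 f) (hc : HasCompactSupport f) {α : ℝ} (hα : 1 ≤ α) (d : ℝ) (x : E) {r : ℝ}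
    (hr : 0 < r) :
    ENNReal.ofReal (r ^ (α - 1)) * ⨍⁻ y in sphere x r, ‖f y‖ₑ ∂μH[d] ≤
      ((volume : Measure E).toSphere univ)⁻¹ *
        rieszPotential volume α (fun y ↦ ‖fderiv ℝ f y‖ₑ) x := by
  calc ENNReal.ofReal (r ^ (α - 1)) * ⨍⁻ y in sphere x r, ‖f y‖ₑ ∂μH[d]
      ≤ ENNReal.ofReal (r ^ (α - 1)) *
          ⨍⁻ θ : sphere (0 : E) 1, ‖f (x + r • (θ : E))‖ₑ ∂(volume : Measure E).toSphere := by
        gcongr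
        exact setLAverage_sphere_le_laverage_toSphere d x hr _
    _ = ((volume : Measure E).toSphere univ)⁻¹ * (ENNReal.ofReal (r ^ (α - 1)) *
          ∫⁻ θ : sphere (0 : E) 1, ‖f (x + r • (θ : E))‖ₑ ∂(volume : Measure E).toSphere) := by
        rw [laverage_eq, ENNReal.div_eq_inv_mul, mul_left_comm]
    _ ≤ ((volume : Measure E).toSphere univ)⁻¹ * (ENNReal.ofReal (r ^ (α - 1)) *
          ∫⁻ θ : sphere (0 : E) 1, (∫⁻ s in Ioi r, ‖fderiv ℝ f (x + s • (θ : E))‖ₑ)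
            ∂(volume : Measure E).toSphere) := by
        gcongr with θ
        exact enorm_le_setLIntegral_Ioi_enorm_fderiv hf hc x (norm_eq_of_mem_sphere θ) r
    _ ≤ ((volume : Measure E).toSphere univ)⁻¹ *
          rieszPotential volume α (fun y ↦ ‖fderiv ℝ f y‖ₑ) x := by
        gcongr
        exact mul_lintegral_toSphere_Ioi_le_rieszPotential volume hα
          (hf.continuous_fderiv one_ne_zero).enorm.measurable x hr

end PointwiseBound

section SphericalMaximal

variable {n : ℕ} {f : Rn n → ℝ}

theorem nontrivial_Rn (hn : 0 < n) : Nontrivial (Rn n) :=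
  have : Nonempty (Fin n) := ⟨⟨0, hn⟩⟩
  inferInstance

theorem ofReal_gradNorm (f : Rn n → ℝ) (y : Rn n) :
    ENNReal.ofReal (gradNorm f y) = ‖fderiv ℝ f y‖ₑ := by
  rw [gradNorm, gradient, LinearIsometryEquiv.norm_map, ofReal_norm]

theorem measurable_ofReal_gradNorm (hf : ContDiff ℝ 1 f) :
    Measurable fun y ↦ ENNReal.ofReal (gradNorm f y) := by
  simp only [ofReal_gradNorm]
  exact (hf.continuous_fderiv one_ne_zero).enorm.measurable

theorem sphMax_eq_iSup_setLAverage (β : ℝ) (f : Rn n → ℝ) (x : Rn n) :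
    sphMax n β f x = ⨆ (r : ℝ) (_ : 0 < r),
      ENNReal.ofReal (r ^ β) * ⨍⁻ y in sphere x r, ‖f y‖ₑ ∂μH[(n : ℝ) - 1] := by
  simp only [sphMax, setLAverage_eq, ENNReal.div_eq_inv_mul, Real.enorm_eq_ofReal_abs]

theorem exists_sphMax_le_rieszPotential (hn : 0 < n) {α : ℝ} (hα : 1 ≤ α) :
    ∃ c > 0, ∀ f : Rn n → ℝ, ContDiff ℝ 1 f → HasCompactSupport f → ∀ x,
      sphMax n (α - 1) f x ≤ ENNReal.ofReal c *
        rieszPotential volume α (fun y ↦ ENNReal.ofReal (gradNorm f y)) x := by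
  have := nontrivial_Rn hn
  have htotal := toSphere_real_univ_pos (volume : Measure (Rn n))
  refine ⟨_, inv_pos.2 htotal, fun f hf hc x ↦ ?_⟩
  rw [sphMax_eq_iSup_setLAverage, ENNReal.ofReal_inv_of_pos htotal, ofReal_measureReal]
  simp only [ofReal_gradNorm]
  exact iSup₂_le fun r hr ↦ mul_setLAverage_sphere_le_rieszPotential hf hc hα _ x hr

theorem exists_lqNorm_sphMax_le {α p q : ℝ} (hn : 0 < n) (hα : 1 ≤ α) (hp : 1 < p) (hq : 0 < q)
    (hpq : 1 / q = 1 / p - α / n) :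
    ∃ C > 0, ∀ f : Rn n → ℝ, ContDiff ℝ 1 f → HasCompactSupport f →
      lqNorm n q (sphMax n (α - 1) f) ≤
        ENNReal.ofReal C * lqNorm n p (fun x ↦ ENNReal.ofReal (gradNorm f x)) := by
  have := nontrivial_Rn hn
  obtain ⟨c, hc, hpointwise⟩ := exists_sphMax_le_rieszPotential hn hα
  obtain ⟨C, hC, hstrong⟩ := exists_lintegral_rieszPotential_rpow_le
    (μ := (volume : Measure (Rn n))) (one_pos.trans_le hα) hp hq
    (by rwa [finrank_euclideanSpace_fin])
  refine ⟨c * C, mul_pos hc hC, fun f hf hfc ↦ ?_⟩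
  calc lqNorm n q (sphMax n (α - 1) f)
      ≤ (∫⁻ x, (ENNReal.ofReal c *
          rieszPotential volume α (fun y ↦ ENNReal.ofReal (gradNorm f y)) x) ^ q) ^ (1 / q) := by
        unfold lqNorm
        gcongr with x
        exact hpointwise f hf hfc x
    _ = ENNReal.ofReal c * (∫⁻ x,
          rieszPotential volume α (fun y ↦ ENNReal.ofReal (gradNorm f y)) x ^ q) ^ (1 / q) :=
        lintegral_const_mul_rpow_rpow hq ENNReal.ofReal_ne_top
    _ ≤ ENNReal.ofReal c * (ENNReal.ofReal C *
          lqNorm n p (fun x ↦ ENNReal.ofReal (gradNorm f x))) := by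
        gcongr
        exact hstrong _ (measurable_ofReal_gradNorm hf)
    _ = ENNReal.ofReal (c * C) * lqNorm n p (fun x ↦ ENNReal.ofReal (gradNorm f x)) := by
        rw [ENNReal.ofReal_mul hc.le, mul_assoc]

theorem exists_weakNorm_sphMax_le {α q : ℝ} (hn : 0 < n) (hα : 1 ≤ α) (hq : 0 < q)
    (hαq : 1 / q = 1 - α / n) :
    ∃ C > 0, ∀ f : Rn n → ℝ, ContDiff ℝ 1 f → HasCompactSupport f →
      weakNorm n q (sphMax n (α - 1) f) ≤
        ENNReal.ofReal C * lqNorm n 1 (fun x ↦ ENNReal.ofReal (gradNorm f x)) := by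
  have := nontrivial_Rn hn
  obtain ⟨c, hc, hpointwise⟩ := exists_sphMax_le_rieszPotential hn hα
  obtain ⟨C, hC, hweak⟩ := exists_mul_measure_lt_rieszPotential_rpow_le
    (μ := (volume : Measure (Rn n))) (one_pos.trans_le hα) hq
    (by rwa [finrank_euclideanSpace_fin])
  refine ⟨C * c, mul_pos hC hc, fun f hf hfc ↦ iSup₂_le fun t ht ↦ ?_⟩
  have hgrad : Measurable fun y ↦ ENNReal.ofReal c * ENNReal.ofReal (gradNorm f y) :=
    (measurable_ofReal_gradNorm hf).const_mul _
  calc ENNReal.ofReal t * volume {x | ENNReal.ofReal t < sphMax n (α - 1) f x} ^ (1 / q)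
      ≤ ENNReal.ofReal t * volume {x | ENNReal.ofReal t < rieszPotential volume α
          (fun y ↦ ENNReal.ofReal c * ENNReal.ofReal (gradNorm f y)) x} ^ (1 / q) := by
        gcongr with x
        rw [rieszPotential_const_mul ENNReal.ofReal_ne_top]
        exact hpointwise f hf hfc x
    _ ≤ ENNReal.ofReal C * ∫⁻ y, ENNReal.ofReal c * ENNReal.ofReal (gradNorm f y) :=
        hweak _ hgrad t ht
    _ = ENNReal.ofReal (C * c) * lqNorm n 1 (fun x ↦ ENNReal.ofReal (gradNorm f x)) := by
        rw [lintegral_const_mul' _ _ ENNReal.ofReal_ne_top, ENNReal.ofReal_mul hC.le, mul_assoc]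
        simp only [lqNorm, ENNReal.rpow_one, div_one]

end SphericalMaximal

theorem statement16_general (n : ℕ) (α : ℝ) (hα1 : 1 ≤ α) (hαn : α < n) :
    (∀ p q : ℝ, 1 < p → p < n / α → 1 / q = 1 / p - α / n →
      ∃ C > (0 : ℝ), ∀ f : Rn n → ℝ, ContDiff ℝ 1 f → HasCompactSupport f →
        lqNorm n q (sphMax n (α - 1) f) ≤
          ENNReal.ofReal C * lqNorm n p (fun x ↦ ENNReal.ofReal (gradNorm f x))) ∧
    (∃ C > (0 : ℝ), ∀ f : Rn n → ℝ, ContDiff ℝ 1 f → HasCompactSupport f →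
      weakNorm n ((n : ℝ) / ((n : ℝ) - α)) (sphMax n (α - 1) f) ≤
        ENNReal.ofReal C * lqNorm n 1 (fun x ↦ ENNReal.ofReal (gradNorm f x))) := by
  have hα0 : 0 < α := one_pos.trans_le hα1
  have hn0 : (0 : ℝ) < n := hα0.trans hαn
  have hn : 0 < n := Nat.cast_pos.1 hn0
  constructor
  · intro p q hp hpn hpq
    have hq : 0 < q := by
      rw [← one_div_pos, hpq, sub_pos, div_lt_div_iff₀ hn0 (one_pos.trans hp), one_mul, mul_comm]
      exact (lt_div_iff₀ hα0).1 hpn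
    exact exists_lqNorm_sphMax_le hn hα1 hp hq hpq
  · refine exists_weakNorm_sphMax_le hn hα1 (div_pos hn0 (sub_pos.2 hαn)) ?_
    rw [one_div_div, sub_div, div_self hn0.ne']

/-- Sobolev bounds for the fractional spherical maximal operator:
`𝒮_{α-1} : Ẇ^{1,p} → L^q` for `1 < p < n/α`, `1/q = 1/p - α/n`, and the weak-type endpoint
`𝒮_{α-1} : Ẇ^{1,1} → L^{n/(n-α),∞}`. -/
theorem statement16 (n : ℕ) (hn : 2 ≤ n) (α : ℝ) (hα1 : 1 ≤ α) (hαn : α < n) :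
    (∀ p q : ℝ, 1 < p → p < n / α → 1 / q = 1 / p - α / n →
      ∃ C > (0 : ℝ), ∀ f : Rn n → ℝ, IsCcSmooth f →
        lqNorm n q (sphMax n (α - 1) f) ≤
          ENNReal.ofReal C * lqNorm n p (fun x => ENNReal.ofReal (gradNorm f x))) ∧
    (∃ C > (0 : ℝ), ∀ f : Rn n → ℝ, IsCcSmooth f →
      weakNorm n ((n : ℝ) / ((n : ℝ) - α)) (sphMax n (α - 1) f) ≤
        ENNReal.ofReal C * lqNorm n 1 (fun x => ENNReal.ofReal (gradNorm f x))) := by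
  obtain ⟨strong, C, hC, weak⟩ := statement16_general n α hα1 hαn
  refine ⟨fun p q hp hpn hpq ↦ ?_, C, hC, fun f hf ↦ weak f (hf.1.of_le (mod_cast le_top)) hf.2⟩
  obtain ⟨C, hC, bound⟩ := strong p q hp hpn hpq
  exact ⟨C, hC, fun f hf ↦ bound f (hf.1.of_le (mod_cast le_top)) hf.2⟩

end
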